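/- Let Ω ⊂ ℝ² be a nonempty bounded open set, let J := [[0,−1],[1,0]] be the rotation by π/2, and let F, a₀, a₁ ∈ ℝ^{2×2} with a₀ ≠ a₁ and a := a₁ − a₀. Then the infimum, taken over all v ∈ C_c^∞(Ω; ℝ²), of ∫_Ω dist²(F + Dv(x)·J, {a₀, a₁}) dx equals |Ω| · min_{θ ∈ [0,1]} ( ‖F − a_θ‖² + θ(1−θ)·min_{ξ ∈ S¹} ‖aξ‖² ), where Dv(x) denotes the Jacobian matrix of v at x. Note that every matrix field of the form F + Dv(x)·J is divergence-free (row-wise). -/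

import Mathlib

open MeasureTheory

/-- Squared Frobenius norm of a matrix. -/
def frob2 (M : Matrix (Fin 2) (Fin 2) ℝ) : ℝ := ∑ i, ∑ j, (M i j) ^ 2

/-- The Jacobian matrix of `v` at `x`, entry `(i,j)` is `∂ vᵢ / ∂ xⱼ`. -/
noncomputable def jacobian (v : (Fin 2 → ℝ) → (Fin 2 → ℝ)) (x : Fin 2 → ℝ) :
    Matrix (Fin 2) (Fin 2) ℝ :=
  Matrix.of fun i j => fderiv ℝ v x (Pi.single j 1) i


open Filter Topology

lemma q_bound {q : ((Fin 2 → ℝ) →L[ℝ] ℝ) → ℝ} (hq : Continuous q) (R : ℝ) :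
    ∃ C, ∀ p, ‖p‖ ≤ R → ‖q p‖ ≤ C := by
  obtain ⟨C, hC⟩ := (isCompact_closedBall (0 : (Fin 2 → ℝ) →L[ℝ] ℝ) R).exists_bound_of_continuousOn
    hq.continuousOn
  exact ⟨C, fun p hp => hC p (by simpa using hp)⟩

/-- cut-off functions -/
lemma exists_cutoff {Ω : Set (Fin 2 → ℝ)} (hΩ : IsOpen Ω) (hb : Bornology.IsBounded Ω) :
    ∃ η : ℕ → (Fin 2 → ℝ) → ℝ, (∀ k, ContDiff ℝ (⊤ : ℕ∞) (η k)) ∧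
      (∀ k, HasCompactSupport (η k)) ∧ (∀ k, tsupport (η k) ⊆ Ω) ∧
      (∀ k x, 0 ≤ η k x ∧ η k x ≤ 1) ∧
      (∀ x ∈ Ω, Tendsto (fun k => η k x) atTop (𝓝 1)) := by
  obtain ⟨f, hf, hfs, hfr⟩ := hΩ.exists_contDiff_support_eq (n := ⊤)
  have hf0 : ∀ x, 0 ≤ f x := fun x => (hfr ⟨x, rfl⟩).1
  have hsub : ∀ k : ℕ, tsupport (fun x => Real.smoothTransition (k * f x - 1)) ⊆
      {x | 1 ≤ k * f x} := by
    intro k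
    apply closure_minimal
    · intro x hx
      by_contra h
      simp only [Set.mem_ofPred_eq, not_le] at h
      exact hx (Real.smoothTransition.zero_of_nonpos (by linarith))
    · exact isClosed_le continuous_const (continuous_const.mul hfs.continuous)
  have hsub2 : ∀ k : ℕ, tsupport (fun x => Real.smoothTransition (k * f x - 1)) ⊆ Ω := by
    intro k x hx
    have h1 : 1 ≤ k * f x := hsub k hx
    rw [← hf]
    intro h0
    rw [h0] at h1
    norm_num at h1
  refine ⟨fun k x => Real.smoothTransition (k * f x - 1), ?_, ?_, hsub2, ?_, ?_⟩
  · intro k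
    exact Real.smoothTransition.contDiff.comp ((contDiff_const.mul hfs).sub contDiff_const)
  · intro k
    exact Metric.isCompact_of_isClosed_isBounded (isClosed_tsupport _) (hb.subset (hsub2 k))
  · intro k x
    exact ⟨Real.smoothTransition.nonneg _, Real.smoothTransition.le_one _⟩
  · intro x hx
    have hpos : 0 < f x := by
      rw [← hf] at hx
      exact lt_of_le_of_ne (hf0 x) (Ne.symm hx)
    have ht : Tendsto (fun k : ℕ => (k : ℝ) * f x) atTop atTop :=
      tendsto_natCast_atTop_atTop.atTop_mul_const hpos
    apply tendsto_const_nhds.congr'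
    filter_upwards [ht.eventually_ge_atTop 2] with k hk
    exact (Real.smoothTransition.one_of_one_le (by linarith)).symm

/-- phase averaging -/
lemma phase_avg {Ω : Set (Fin 2 → ℝ)} (hΩ : IsOpen Ω) (hb : Bornology.IsBounded Ω)
    {Ψ : (Fin 2 → ℝ) × ℝ → ℝ} (hc : Continuous Ψ) {C : ℝ} (hC : ∀ z, ‖Ψ z‖ ≤ C)
    (hper : ∀ x t, Ψ (x, t + 2 * Real.pi) = Ψ (x, t))
    {l : (Fin 2 → ℝ) → ℝ} (hl : Continuous l) {I : ℝ}
    (hI : ∀ s, I ≤ ∫ x in Ω, Ψ (x, l x + s)) :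
    2 * Real.pi * I ≤ ∫ z, Ψ z ∂((volume.restrict Ω).prod
      (volume.restrict (Set.Ioc (-Real.pi) Real.pi))) := by
  have : IsFiniteMeasure (volume.restrict Ω) :=
    ⟨by rw [Measure.restrict_apply_univ]; exact hb.measure_lt_top⟩
  have hint : ∀ {Φ : (Fin 2 → ℝ) × ℝ → ℝ}, Continuous Φ → (∀ z, ‖Φ z‖ ≤ C) → Integrable Φ
      ((volume.restrict Ω).prod (volume.restrict (Set.Ioc (-Real.pi) Real.pi))) := by
    intro Φ h1 h2
    exact Integrable.of_bound h1.aestronglyMeasurable C (Eventually.of_forall h2)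
  have hc2 : Continuous (fun z : (Fin 2 → ℝ) × ℝ => Ψ (z.1, l z.1 + z.2)) := by fun_prop
  have hi2 := hint hc2 (fun z => hC _)
  have hpi : -Real.pi ≤ Real.pi := by linarith [Real.pi_pos]
  rw [integral_prod _ (hint hc hC)]
  have e1 : ∀ x, ∫ t in Set.Ioc (-Real.pi) Real.pi, Ψ (x, t)
      = ∫ t in Set.Ioc (-Real.pi) Real.pi, Ψ (x, l x + t) := by
    intro x
    have hp : Function.Periodic (fun t => Ψ (x, t)) (2 * Real.pi) := fun t => hper x t
    have h1 := hp.intervalIntegral_add_eq (-Real.pi) (l x + -Real.pi)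
    rw [← intervalIntegral.integral_of_le hpi, ← intervalIntegral.integral_of_le hpi,
      intervalIntegral.integral_comp_add_left (fun t => Ψ (x, t)) (l x)]
    convert h1 using 2 <;> ring
  simp_rw [e1]
  rw [integral_integral_swap (f := fun x t => Ψ (x, l x + t)) hi2]
  have h3 : ∫ t in Set.Ioc (-Real.pi) Real.pi, I ≤
      ∫ t in Set.Ioc (-Real.pi) Real.pi, ∫ x in Ω, Ψ (x, l x + t) := by
    apply integral_mono (integrable_const _) hi2.integral_prod_right
    intro s
    exact hI s
  simp only [integral_const, smul_eq_mul] at h3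
  refine le_trans (le_of_eq ?_) h3
  rw [measureReal_restrict_apply_univ, Real.volume_real_Ioc_of_le hpi]
  ring

lemma step1 {Ω : Set (Fin 2 → ℝ)} (hΩ : IsOpen Ω) (hb : Bornology.IsBounded Ω)
    {q : ((Fin 2 → ℝ) →L[ℝ] ℝ) → ℝ} (hq : Continuous q) {I : ℝ}
    (hI : ∀ φ : (Fin 2 → ℝ) → ℝ, ContDiff ℝ (⊤ : ℕ∞) φ → HasCompactSupport φ → tsupport φ ⊆ Ω →
      I ≤ ∫ x in Ω, q (fderiv ℝ φ x))
    (n : (Fin 2 → ℝ) →L[ℝ] ℝ) {g ψ : ℝ → ℝ} (hψ : ContDiff ℝ (⊤ : ℕ∞) ψ)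
    (hd : ∀ t, HasDerivAt ψ (g t) t) (hg : Continuous g)
    (hgp : Function.Periodic g (2 * Real.pi)) (hψp : Function.Periodic ψ (2 * Real.pi))
    {B : ℝ} (hgB : ∀ t, |g t| ≤ 1) (hψB : ∀ t, |ψ t| ≤ B)
    {η : (Fin 2 → ℝ) → ℝ} (hη : ContDiff ℝ (⊤ : ℕ∞) η) (hηc : HasCompactSupport η)
    (hηs : tsupport η ⊆ Ω) (hη1 : ∀ x, 0 ≤ η x ∧ η x ≤ 1) {R : ℝ}
    (hR : ∀ x, ‖fderiv ℝ η x‖ ≤ R) {ε : ℝ} (hε : 0 < ε) (hε1 : ε ≤ 1) :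
    2 * Real.pi * I ≤ ∫ z, q ((η z.1 * g z.2) • n + (ε * ψ z.2) • fderiv ℝ η z.1)
      ∂((volume.restrict Ω).prod (volume.restrict (Set.Ioc (-Real.pi) Real.pi))) := by
  obtain ⟨C, hC⟩ := q_bound hq (‖n‖ + B * R)
  have hdη : Continuous (fderiv ℝ η) := hη.continuous_fderiv (by simp)
  have hηcont := hη.continuous
  have hψcont := hψ.continuous
  refine phase_avg hΩ hb (Ψ := fun z => q ((η z.1 * g z.2) • n + (ε * ψ z.2) • fderiv ℝ η z.1))
    (by fun_prop) (C := C) ?_ ?_ (l := fun x => n x / ε) (by fun_prop) ?_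
  · intro z
    apply hC
    refine (norm_add_le _ _).trans (add_le_add ?_ ?_)
    · rw [norm_smul]
      apply mul_le_of_le_one_left (norm_nonneg _)
      rw [Real.norm_eq_abs, abs_mul, abs_of_nonneg (hη1 _).1]
      exact mul_le_one₀ (hη1 _).2 (abs_nonneg _) (hgB _)
    · rw [norm_smul]
      have hB0 : 0 ≤ B := (abs_nonneg _).trans (hψB 0)
      apply mul_le_mul _ (hR _) (norm_nonneg _) hB0
      rw [Real.norm_eq_abs, abs_mul, abs_of_pos hε]
      calc ε * |ψ z.2| ≤ 1 * |ψ z.2| := by gcongr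
        _ ≤ B := by simpa using hψB _
  · intro x t
    simp only [hgp t, hψp t]
  · intro s
    have hin : ContDiff ℝ (⊤ : ℕ∞) (fun x => ψ (n x / ε + s)) :=
      hψ.comp ((n.contDiff.div_const ε).add contDiff_const)
    have h := hI (fun x => η x * (ε * ψ (n x / ε + s))) (hη.mul (contDiff_const.mul hin))
      hηc.mul_right ((closure_mono (by
        intro x hx
        exact left_ne_zero_of_mul hx)).trans hηs)
    refine h.trans (le_of_eq ?_)
    congr 1
    ext x
    congr 1
    have h1 : HasFDerivAt (fun x => n x / ε + s) (ε⁻¹ • n) x := by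
      have := (n.hasFDerivAt (x := x)).const_mul ε⁻¹
      simp only [div_eq_inv_mul]
      exact this.add_const s
    have h2 := ((hd (n x / ε + s)).comp_hasFDerivAt x h1).const_mul ε
    have h3 := ((hη.differentiable (by simp)) x).hasFDerivAt.mul h2
    have h4 := h3.fderiv
    simp only [Function.comp_def] at h4
    refine Eq.trans h4 ?_
    congr 1
    ext y
    simp
    field_simp

lemma step2 {Ω : Set (Fin 2 → ℝ)} (hΩ : IsOpen Ω) (hb : Bornology.IsBounded Ω)
    {q : ((Fin 2 → ℝ) →L[ℝ] ℝ) → ℝ} (hq : Continuous q) {I : ℝ}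
    (hI : ∀ φ : (Fin 2 → ℝ) → ℝ, ContDiff ℝ (⊤ : ℕ∞) φ → HasCompactSupport φ → tsupport φ ⊆ Ω →
      I ≤ ∫ x in Ω, q (fderiv ℝ φ x))
    (n : (Fin 2 → ℝ) →L[ℝ] ℝ) {g ψ : ℝ → ℝ} (hψ : ContDiff ℝ (⊤ : ℕ∞) ψ)
    (hd : ∀ t, HasDerivAt ψ (g t) t) (hg : Continuous g)
    (hgp : Function.Periodic g (2 * Real.pi)) (hψp : Function.Periodic ψ (2 * Real.pi))
    {B : ℝ} (hgB : ∀ t, |g t| ≤ 1) (hψB : ∀ t, |ψ t| ≤ B) :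
    2 * Real.pi * I ≤ ∫ z : (Fin 2 → ℝ) × ℝ, q (g z.2 • n)
      ∂((volume.restrict Ω).prod (volume.restrict (Set.Ioc (-Real.pi) Real.pi))) := by
  have : IsFiniteMeasure (volume.restrict Ω) :=
    ⟨by rw [Measure.restrict_apply_univ]; exact hb.measure_lt_top⟩
  have hB0 : 0 ≤ B := (abs_nonneg _).trans (hψB 0)
  obtain ⟨η, hη, hηc, hηs, hη1, hηlim⟩ := exists_cutoff hΩ hb
  have hηcont := fun k => (hη k).continuous
  have hψcont := hψ.continuous
  -- remove ε
  have A : ∀ k, 2 * Real.pi * I ≤ ∫ z : (Fin 2 → ℝ) × ℝ, q ((η k z.1 * g z.2) • n)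
      ∂((volume.restrict Ω).prod (volume.restrict (Set.Ioc (-Real.pi) Real.pi))) := by
    intro k
    have hdη : Continuous (fderiv ℝ (η k)) := (hη k).continuous_fderiv (by simp)
    obtain ⟨R, hR⟩ := ((hηc k).fderiv ℝ).exists_bound_of_continuous hdη
    obtain ⟨C, hC⟩ := q_bound hq (‖n‖ + B * R)
    have hlim : Tendsto (fun j : ℕ => ∫ z, q ((η k z.1 * g z.2) • n +
        ((1 / ((j : ℝ) + 1)) * ψ z.2) • fderiv ℝ (η k) z.1)
        ∂((volume.restrict Ω).prod (volume.restrict (Set.Ioc (-Real.pi) Real.pi)))) atTop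
        (𝓝 (∫ z : (Fin 2 → ℝ) × ℝ, q ((η k z.1 * g z.2) • n)
        ∂((volume.restrict Ω).prod (volume.restrict (Set.Ioc (-Real.pi) Real.pi))))) := by
      apply tendsto_integral_of_dominated_convergence (fun _ => C)
      · intro j
        exact Continuous.aestronglyMeasurable (by have := hηcont k; fun_prop)
      · exact integrable_const _
      · intro j
        refine Eventually.of_forall fun z => hC _ ?_
        refine (norm_add_le _ _).trans (add_le_add ?_ ?_)
        · rw [norm_smul]
          apply mul_le_of_le_one_left (norm_nonneg _)
          rw [Real.norm_eq_abs, abs_mul, abs_of_nonneg (hη1 k _).1]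
          exact mul_le_one₀ (hη1 k _).2 (abs_nonneg _) (hgB _)
        · rw [norm_smul]
          apply mul_le_mul _ (hR _) (norm_nonneg _) hB0
          rw [Real.norm_eq_abs, abs_mul, abs_of_pos Nat.one_div_pos_of_nat]
          calc (1 / ((j : ℝ) + 1)) * |ψ z.2| ≤ 1 * |ψ z.2| := by
                gcongr
                rw [div_le_one (by positivity)]
                simp
            _ ≤ B := by simpa using hψB _
      · refine Eventually.of_forall fun z => (hq.tendsto _).comp ?_
        have h0 := (tendsto_one_div_add_atTop_nhds_zero_nat (𝕜 := ℝ)).mul_const (ψ z.2)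
        have h1 := (h0.smul_const (fderiv ℝ (η k) z.1)).const_add ((η k z.1 * g z.2) • n)
        simpa using h1
    refine ge_of_tendsto' hlim fun j => ?_
    exact step1 hΩ hb hq hI n hψ hd hg hgp hψp hgB hψB (hη k) (hηc k) (hηs k) (hη1 k) hR
      Nat.one_div_pos_of_nat (by rw [div_le_one (by positivity)]; simp)
  obtain ⟨C, hC⟩ := q_bound hq ‖n‖
  refine ge_of_tendsto' (x := atTop) (f := fun k => ∫ z : (Fin 2 → ℝ) × ℝ,
    q ((η k z.1 * g z.2) • n)
      ∂((volume.restrict Ω).prod (volume.restrict (Set.Ioc (-Real.pi) Real.pi)))) ?_ A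
  apply tendsto_integral_of_dominated_convergence (fun _ => C)
  · intro k
    exact Continuous.aestronglyMeasurable (by have := hηcont k; fun_prop)
  · exact integrable_const _
  · intro k
    refine Eventually.of_forall fun z => hC _ ?_
    rw [norm_smul]
    apply mul_le_of_le_one_left (norm_nonneg _)
    rw [Real.norm_eq_abs, abs_mul, abs_of_nonneg (hη1 k _).1]
    exact mul_le_one₀ (hη1 k _).2 (abs_nonneg _) (hgB _)
  · have hae : ∀ᵐ z ∂((volume.restrict Ω).prod
        (volume.restrict (Set.Ioc (-Real.pi) Real.pi))), z.1 ∈ Ω := by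
      exact Measure.quasiMeasurePreserving_fst.ae (ae_restrict_mem hΩ.measurableSet)
    filter_upwards [hae] with z hz
    refine (hq.tendsto _).comp ?_
    have h1 := ((hηlim z.1 hz).mul_const (g z.2)).smul_const n
    simpa using h1

lemma level_set {θ : ℝ} (h0 : 0 ≤ θ) (h1 : θ ≤ 1) {t : ℝ} (ht : t ∈ Set.Ioc (-Real.pi) Real.pi) :
    Real.cos (Real.pi * θ) < Real.cos t ↔ |t| < Real.pi * θ := by
  have hp := Real.pi_pos
  rw [← Real.cos_abs t]
  have ha : |t| ≤ Real.pi := abs_le.2 ⟨ht.1.le, ht.2⟩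
  exact Real.strictAntiOn_cos.lt_iff_gt (a := Real.pi * θ) (b := |t|)
    ⟨by positivity, by nlinarith⟩ ⟨abs_nonneg _, ha⟩

/-- one-dimensional profile functions -/
lemma profile_lim {θ : ℝ} (h0 : 0 ≤ θ) (h1 : θ ≤ 1) {t : ℝ}
    (ht : t ∈ Set.Ioc (-Real.pi) Real.pi) :
    Tendsto (fun k : ℕ => Real.smoothTransition (k * (Real.cos t - Real.cos (Real.pi * θ))))
      atTop (𝓝 ((Set.Ioo (-(Real.pi * θ)) (Real.pi * θ)).indicator (fun _ => (1 : ℝ)) t)) := by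
  by_cases hm : |t| < Real.pi * θ
  · have hm' := (level_set h0 h1 ht).2 hm
    rw [Set.indicator_of_mem (by exact abs_lt.1 hm)]
    have htt : Tendsto (fun k : ℕ => (k : ℝ) * (Real.cos t - Real.cos (Real.pi * θ))) atTop atTop :=
      tendsto_natCast_atTop_atTop.atTop_mul_const (by linarith)
    apply tendsto_const_nhds.congr'
    filter_upwards [htt.eventually_ge_atTop 1] with k hk
    exact (Real.smoothTransition.one_of_one_le hk).symm
  · have hm' := mt (level_set h0 h1 ht).1 hm
    rw [Set.indicator_of_notMem (by intro h; exact hm (abs_lt.2 h))]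
    apply tendsto_const_nhds.congr'
    refine Eventually.of_forall fun k => (Real.smoothTransition.zero_of_nonpos ?_).symm
    exact mul_nonpos_of_nonneg_of_nonpos (by positivity) (by linarith)

lemma step3 {Ω : Set (Fin 2 → ℝ)} (hΩ : IsOpen Ω) (hb : Bornology.IsBounded Ω)
    {q : ((Fin 2 → ℝ) →L[ℝ] ℝ) → ℝ} (hq : Continuous q) {I : ℝ}
    (hI : ∀ φ : (Fin 2 → ℝ) → ℝ, ContDiff ℝ (⊤ : ℕ∞) φ → HasCompactSupport φ → tsupport φ ⊆ Ω →
      I ≤ ∫ x in Ω, q (fderiv ℝ φ x))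
    (n : (Fin 2 → ℝ) →L[ℝ] ℝ) {θ : ℝ} (h0 : 0 ≤ θ) (h1 : θ ≤ 1) :
    I ≤ (volume Ω).toReal * (θ * q ((1 - θ) • n) + (1 - θ) * q ((-θ) • n)) := by
  have : IsFiniteMeasure (volume.restrict Ω) :=
    ⟨by rw [Measure.restrict_apply_univ]; exact hb.measure_lt_top⟩
  have hp := Real.pi_pos
  have hpi : -Real.pi ≤ Real.pi := by linarith
  set χ : ℕ → ℝ → ℝ := fun k t =>
    Real.smoothTransition (k * (Real.cos t - Real.cos (Real.pi * θ))) with hχ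
  set χ' : ℝ → ℝ := (Set.Ioo (-(Real.pi * θ)) (Real.pi * θ)).indicator (fun _ => (1 : ℝ)) with hχ'
  have hχs : ∀ k, ContDiff ℝ (⊤ : ℕ∞) (χ k) := fun k =>
    Real.smoothTransition.contDiff.comp
      (contDiff_const.mul (Real.contDiff_cos.sub contDiff_const))
  have hχc := fun k => (hχs k).continuous
  have hχ0 : ∀ k t, 0 ≤ χ k t := fun k t => Real.smoothTransition.nonneg _
  have hχ1 : ∀ k t, χ k t ≤ 1 := fun k t => Real.smoothTransition.le_one _
  have hχp : ∀ k, Function.Periodic (χ k) (2 * Real.pi) := fun k t => by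
    simp only [hχ, Real.cos_add_two_pi]
  have hχlim : ∀ t ∈ Set.Ioc (-Real.pi) Real.pi, Tendsto (fun k => χ k t) atTop (𝓝 (χ' t)) :=
    fun t ht => profile_lim h0 h1 ht
  set m : ℕ → ℝ := fun k => (2 * Real.pi)⁻¹ * ∫ t in Set.Ioc (-Real.pi) Real.pi, χ k t with hm
  have hsub : Set.Ioo (-(Real.pi * θ)) (Real.pi * θ) ⊆ Set.Ioc (-Real.pi) Real.pi := by
    intro t ht
    have : Real.pi * θ ≤ Real.pi := by nlinarith
    exact ⟨by linarith [ht.1], by linarith [ht.2]⟩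
  have hvol : (volume.restrict (Set.Ioc (-Real.pi) Real.pi)).real
      (Set.Ioo (-(Real.pi * θ)) (Real.pi * θ)) = 2 * Real.pi * θ := by
    rw [measureReal_restrict_apply measurableSet_Ioo, Set.inter_eq_left.2 hsub,
      Real.volume_real_Ioo_of_le (by nlinarith)]
    ring
  have hlim1 : Tendsto (fun k => ∫ t in Set.Ioc (-Real.pi) Real.pi, χ k t) atTop
      (𝓝 (2 * Real.pi * θ)) := by
    have : ∫ t in Set.Ioc (-Real.pi) Real.pi, χ' t = 2 * Real.pi * θ := by
      rw [hχ', integral_indicator_const _ measurableSet_Ioo, hvol, smul_eq_mul, mul_one]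
    rw [← this]
    apply tendsto_integral_of_dominated_convergence (fun _ => 1)
    · exact fun k => (hχc k).aestronglyMeasurable
    · exact integrable_const _
    · intro k
      refine Eventually.of_forall fun t => ?_
      rw [Real.norm_eq_abs, abs_of_nonneg (hχ0 k t)]
      exact hχ1 k t
    · filter_upwards [ae_restrict_mem measurableSet_Ioc] with t ht using hχlim t ht
  have hmlim : Tendsto m atTop (𝓝 θ) := by
    have := hlim1.const_mul (2 * Real.pi)⁻¹
    convert this using 2
    field_simp
  have hm0 : ∀ k, 0 ≤ m k := fun k =>
    mul_nonneg (by positivity) (integral_nonneg fun t => hχ0 k t)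
  have hm1 : ∀ k, m k ≤ 1 := by
    intro k
    have : ∫ t in Set.Ioc (-Real.pi) Real.pi, χ k t ≤ ∫ t in Set.Ioc (-Real.pi) Real.pi, (1:ℝ) := by
      refine integral_mono ?_ (integrable_const _) (fun t => hχ1 k t)
      exact (hχc k).integrableOn_Ioc
    simp only [integral_const, smul_eq_mul, mul_one, measureReal_restrict_apply_univ,
      Real.volume_real_Ioc_of_le hpi] at this
    simp only [hm]
    rw [inv_mul_le_iff₀ (by positivity)]
    linarith
  have hgB : ∀ k t, |χ k t - m k| ≤ 1 := by
    intro k t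
    rw [abs_le]
    constructor <;> linarith [hχ0 k t, hχ1 k t, hm0 k, hm1 k]
  have A : ∀ k, 2 * Real.pi * I ≤ ∫ z : (Fin 2 → ℝ) × ℝ, q ((χ k z.2 - m k) • n)
      ∂((volume.restrict Ω).prod (volume.restrict (Set.Ioc (-Real.pi) Real.pi))) := by
    intro k
    have hgc : Continuous (fun t => χ k t - m k) := (hχc k).sub continuous_const
    have hgp : Function.Periodic (fun t => χ k t - m k) (2 * Real.pi) := fun t => by
      simp only [hχp k t]
    have hd : ∀ t, HasDerivAt (fun u => ∫ x in (0:ℝ)..u, (χ k x - m k)) (χ k t - m k) t :=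
      fun t => intervalIntegral.integral_hasDerivAt_right (hgc.intervalIntegrable _ _)
        (hgc.stronglyMeasurableAtFilter _ _) hgc.continuousAt
    have hψs : ContDiff ℝ (⊤ : ℕ∞) (fun u => ∫ x in (0:ℝ)..u, (χ k x - m k)) := by
      rw [contDiff_infty_iff_deriv]
      refine ⟨fun t => (hd t).differentiableAt, ?_⟩
      have : deriv (fun u => ∫ x in (0:ℝ)..u, (χ k x - m k)) = fun t => χ k t - m k :=
        funext fun t => (hd t).deriv
      rw [this]
      exact (hχs k).sub contDiff_const
    have hz : ∫ x in (-Real.pi)..(-Real.pi + 2 * Real.pi), (χ k x - m k) = 0 := by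
      have e : -Real.pi + 2 * Real.pi = Real.pi := by ring
      rw [e, intervalIntegral.integral_sub ((hχc k).intervalIntegrable _ _)
        (continuous_const.intervalIntegrable _ _), intervalIntegral.integral_of_le hpi,
        intervalIntegral.integral_const, smul_eq_mul]
      simp only [hm]
      field_simp
      ring
    have hψp : Function.Periodic (fun u => ∫ x in (0:ℝ)..u, (χ k x - m k)) (2 * Real.pi) := by
      intro t
      have h2 := hgp.intervalIntegral_add_eq t (-Real.pi)
      rw [hz] at h2
      have h3 := intervalIntegral.integral_add_adjacent_intervals
        (hgc.intervalIntegrable 0 t (μ := volume)) (hgc.intervalIntegrable t (t + 2 * Real.pi))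
      rw [h2, add_zero] at h3
      exact h3.symm
    obtain ⟨B, hB⟩ := (isCompact_Icc (a := (0:ℝ)) (b := 2 * Real.pi)).exists_bound_of_continuousOn
      hψs.continuous.continuousOn
    refine step2 hΩ hb hq hI n hψs hd hgc hgp hψp (B := B) (hgB k) ?_
    intro t
    obtain ⟨y, hy, hty⟩ := hψp.exists_mem_Ico₀ (by positivity) t
    rw [hty]
    exact hB y ⟨hy.1, hy.2.le⟩
  obtain ⟨C, hC⟩ := q_bound hq ‖n‖
  have hmeas : Measurable χ' := measurable_const.indicator measurableSet_Ioo
  have key : 2 * Real.pi * I ≤ ∫ z : (Fin 2 → ℝ) × ℝ, q ((χ' z.2 - θ) • n)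
      ∂((volume.restrict Ω).prod (volume.restrict (Set.Ioc (-Real.pi) Real.pi))) := by
    refine ge_of_tendsto' (x := atTop) (f := fun k => ∫ z : (Fin 2 → ℝ) × ℝ,
      q ((χ k z.2 - m k) • n)
      ∂((volume.restrict Ω).prod (volume.restrict (Set.Ioc (-Real.pi) Real.pi)))) ?_ A
    apply tendsto_integral_of_dominated_convergence (fun _ => C)
    · intro k
      exact Continuous.aestronglyMeasurable (by have := hχc k; fun_prop)
    · exact integrable_const _
    · intro k
      refine Eventually.of_forall fun z => hC _ ?_
      rw [norm_smul]
      exact mul_le_of_le_one_left (norm_nonneg _) (hgB k _)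
    · have hae : ∀ᵐ z ∂((volume.restrict Ω).prod
          (volume.restrict (Set.Ioc (-Real.pi) Real.pi))), z.2 ∈ Set.Ioc (-Real.pi) Real.pi :=
        Measure.quasiMeasurePreserving_snd.ae (ae_restrict_mem measurableSet_Ioc)
      filter_upwards [hae] with z hz
      refine (hq.tendsto _).comp ?_
      exact ((hχlim z.2 hz).sub hmlim).smul_const n
  have hform : ∀ t, q ((χ' t - θ) • n) = q ((-θ) • n) +
      (Set.Ioo (-(Real.pi * θ)) (Real.pi * θ)).indicator
        (fun _ => q ((1 - θ) • n) - q ((-θ) • n)) t := by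
    intro t
    by_cases ht : t ∈ Set.Ioo (-(Real.pi * θ)) (Real.pi * θ)
    · simp only [hχ', Set.indicator_of_mem ht]; ring
    · simp only [hχ', Set.indicator_of_notMem ht]; simp
  have hval : ∫ t in Set.Ioc (-Real.pi) Real.pi, q ((χ' t - θ) • n) =
      2 * Real.pi * (θ * q ((1 - θ) • n) + (1 - θ) * q ((-θ) • n)) := by
    simp_rw [hform]
    rw [integral_add (integrable_const _) ((integrable_const _).indicator measurableSet_Ioo),
      integral_indicator_const _ measurableSet_Ioo, hvol, integral_const,
      measureReal_restrict_apply_univ, Real.volume_real_Ioc_of_le hpi]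
    simp only [smul_eq_mul]
    ring
  have hprod := integral_prod_mul (μ := volume.restrict Ω)
    (ν := volume.restrict (Set.Ioc (-Real.pi) Real.pi)) (fun _ => (1:ℝ))
    (fun t => q ((χ' t - θ) • n))
  simp only [one_mul] at hprod
  rw [hprod, hval, integral_const, measureReal_restrict_apply_univ] at key
  simp only [smul_eq_mul, mul_one] at key
  have : 2 * Real.pi * I ≤ 2 * Real.pi * ((volume Ω).toReal *
      (θ * q ((1 - θ) • n) + (1 - θ) * q ((-θ) • n))) := by
    refine key.trans (le_of_eq ?_)
    rw [Measure.real]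
    ring
  exact le_of_mul_le_mul_left this (by positivity)

lemma frob2_expand (M : Matrix (Fin 2) (Fin 2) ℝ) :
    frob2 M = M 0 0 ^ 2 + M 0 1 ^ 2 + M 1 0 ^ 2 + M 1 1 ^ 2 := by
  simp only [frob2, Fin.sum_univ_two]; ring

lemma frob2_nonneg (M : Matrix (Fin 2) (Fin 2) ℝ) : 0 ≤ frob2 M := by
  rw [frob2_expand]; positivity

lemma continuous_frob2 : Continuous frob2 := by
  unfold frob2
  fun_prop

lemma first_order {b e : ℝ} (h : ∀ s : ℝ, 0 < s → s ≤ 1 → 0 ≤ s * b + s ^ 2 * e) : 0 ≤ b := by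
  by_contra hb
  push Not at hb
  have hpos : 0 < -b / (2 * (|e| + 1)) := div_pos (by linarith) (by positivity)
  set s := min 1 (-b / (2 * (|e| + 1))) with hs
  have hs0 : 0 < s := lt_min one_pos hpos
  have h1 := h s hs0 (min_le_left _ _)
  have h2 : 0 ≤ b + s * e := by
    have : 0 ≤ s * (b + s * e) := by linarith [h1, sq s, mul_add s b (s * e), mul_assoc s s e,
      show s * (b + s * e) = s * b + s ^ 2 * e by ring]
    exact nonneg_of_mul_nonneg_right this hs0
  have h3 : s * (2 * (|e| + 1)) ≤ -b := by
    rw [← le_div_iff₀ (by positivity)]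
    exact min_le_right _ _
  have h4 : s * e ≤ s * |e| := mul_le_mul_of_nonneg_left (le_abs_self e) hs0.le
  nlinarith

lemma two_sided {b d : ℝ} (h : ∀ t : ℝ, 0 ≤ 2 * t * b + t ^ 2 * d) : b = 0 := by
  have h1 : 0 ≤ b := first_order (e := d / 4) fun s _ _ => by
    have := h (s / 2); nlinarith
  have h2 : 0 ≤ -b := first_order (e := d / 4) fun s _ _ => by
    have := h (-s / 2); nlinarith
  linarith

set_option maxHeartbeats 2000000 in
/-- pointwise translation bound -/
lemma translation (a : Matrix (Fin 2) (Fin 2) ℝ) (ha : a ≠ 0) (x y H : ℝ) (hxy : x ^ 2 + y ^ 2 = 1)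
    (hH : H = (a 0 0 * x + a 0 1 * y) ^ 2 + (a 1 0 * x + a 1 1 * y) ^ 2)
    (hmin : ∀ s t : ℝ, s ^ 2 + t ^ 2 = 1 →
      H ≤ (a 0 0 * s + a 0 1 * t) ^ 2 + (a 1 0 * s + a 1 1 * t) ^ 2) :
    ∃ c, ∀ (G : Matrix (Fin 2) (Fin 2) ℝ) (τ : ℝ),
      c * (G 0 0 * G 1 1 - G 0 1 * G 1 0) + τ ^ 2 * H ≤ frob2 (G - τ • a) := by
  have hhom : ∀ s t : ℝ, H * (s ^ 2 + t ^ 2) ≤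
      (a 0 0 * s + a 0 1 * t) ^ 2 + (a 1 0 * s + a 1 1 * t) ^ 2 := by
    intro s t
    rcases eq_or_lt_of_le (show 0 ≤ s ^ 2 + t ^ 2 by positivity) with h | h
    · rw [← h, mul_zero]; positivity
    · set r := Real.sqrt (s ^ 2 + t ^ 2) with hr
      have hr2 : r ^ 2 = s ^ 2 + t ^ 2 := Real.sq_sqrt h.le
      have hr0 : r ≠ 0 := (Real.sqrt_pos.2 h).ne'
      have h1 := hmin (s / r) (t / r) (by
        rw [div_pow, div_pow, ← add_div, hr2, div_self h.ne'])
      have h2 := mul_le_mul_of_nonneg_left h1 (sq_nonneg r)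
      have e : r ^ 2 * ((a 0 0 * (s / r) + a 0 1 * (t / r)) ^ 2 +
          (a 1 0 * (s / r) + a 1 1 * (t / r)) ^ 2) =
          (a 0 0 * s + a 0 1 * t) ^ 2 + (a 1 0 * s + a 1 1 * t) ^ 2 := by
        field_simp
      rw [e, hr2] at h2
      linarith
  set p0 := a 0 0 * x + a 0 1 * y with hp0
  set p1 := a 1 0 * x + a 1 1 * y with hp1
  set w0 := -a 0 0 * y + a 0 1 * x with hw0
  set w1 := -a 1 0 * y + a 1 1 * x with hw1
  have hpw : p0 * w0 + p1 * w1 = 0 := by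
    apply two_sided (d := w0 ^ 2 + w1 ^ 2 - H)
    intro t
    have h1 := hhom (x - t * y) (y + t * x)
    have e1 : (x - t * y) ^ 2 + (y + t * x) ^ 2 = 1 + t ^ 2 := by
      linear_combination (1 + t ^ 2) * hxy
    have e2 : a 0 0 * (x - t * y) + a 0 1 * (y + t * x) = p0 + t * w0 := by
      rw [hp0, hw0]; ring
    have e3 : a 1 0 * (x - t * y) + a 1 1 * (y + t * x) = p1 + t * w1 := by
      rw [hp1, hw1]; ring
    rw [e1, e2, e3] at h1
    nlinarith
  have hle : p0 ^ 2 + p1 ^ 2 ≤ w0 ^ 2 + w1 ^ 2 := by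
    have h1 := hmin (-y) x (by linarith)
    rw [hH] at h1
    calc _ ≤ _ := h1
      _ = _ := by rw [hw0, hw1]; ring
  have hw : 0 < w0 ^ 2 + w1 ^ 2 := by
    rcases eq_or_lt_of_le (show 0 ≤ w0 ^ 2 + w1 ^ 2 by positivity) with h | h
    · exfalso
      apply ha
      have q0 : w0 = 0 := by nlinarith
      have q1 : w1 = 0 := by nlinarith
      have r0 : p0 = 0 := by nlinarith
      have r1 : p1 = 0 := by nlinarith
      ext i j
      fin_cases i <;> fin_cases j <;> simp
      · linear_combination x * (hp0.symm.trans r0) - y * (hw0.symm.trans q0) - a 0 0 * hxy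
      · linear_combination y * (hp0.symm.trans r0) + x * (hw0.symm.trans q0) - a 0 1 * hxy
      · linear_combination x * (hp1.symm.trans r1) - y * (hw1.symm.trans q1) - a 1 0 * hxy
      · linear_combination y * (hp1.symm.trans r1) + x * (hw1.symm.trans q1) - a 1 1 * hxy
    · exact h
  obtain ⟨μ, hμ⟩ : ∃ μ, μ = (w0 * p1 - w1 * p0) / (w0 ^ 2 + w1 ^ 2) := ⟨_, rfl⟩
  have hμ0 : p0 = -μ * w1 := by
    rw [hμ]; field_simp; linear_combination w0 * hpw
  have hμ1 : p1 = μ * w0 := by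
    rw [hμ]; field_simp; linear_combination w1 * hpw
  have hμ2 : μ ^ 2 ≤ 1 := by
    rw [hμ0, hμ1] at hle
    by_contra hcon
    push Not at hcon
    nlinarith
  refine ⟨2 * μ, fun G τ => ?_⟩
  set u0 := G 0 0 * x + G 0 1 * y with hu0
  set u1 := G 1 0 * x + G 1 1 * y with hu1
  set z0 := -G 0 0 * y + G 0 1 * x with hz0
  set z1 := -G 1 0 * y + G 1 1 * x with hz1
  have hdet : G 0 0 * G 1 1 - G 0 1 * G 1 0 = u0 * z1 - u1 * z0 := by
    rw [hu0, hu1, hz0, hz1]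
    linear_combination -(G 0 0 * G 1 1 - G 0 1 * G 1 0) * hxy
  have hfr : frob2 (G - τ • a) = (u0 - τ * p0) ^ 2 + (u1 - τ * p1) ^ 2 + (z0 - τ * w0) ^ 2
      + (z1 - τ * w1) ^ 2 := by
    rw [frob2_expand, hu0, hu1, hz0, hz1, hp0, hp1, hw0, hw1]
    simp only [Matrix.sub_apply, Matrix.smul_apply, smul_eq_mul]
    linear_combination -((G 0 0 - τ * a 0 0) ^ 2 + (G 0 1 - τ * a 0 1) ^ 2
      + (G 1 0 - τ * a 1 0) ^ 2 + (G 1 1 - τ * a 1 1) ^ 2) * hxy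
  rw [hdet, hfr, hH, hμ0, hμ1]
  have key : 0 ≤ (u0 - μ * (z1 - τ * w1)) ^ 2 + (u1 + μ * (z0 - τ * w0)) ^ 2
      + (1 - μ ^ 2) * ((z0 - τ * w0) ^ 2 + (z1 - τ * w1) ^ 2) := by
    have : 0 ≤ 1 - μ ^ 2 := by linarith
    positivity
  nlinarith [key]

lemma pointwise_lower (F a₀ a₁ : Matrix (Fin 2) (Fin 2) ℝ) {c H M θ : ℝ}
    (hc : ∀ (G : Matrix (Fin 2) (Fin 2) ℝ) (τ : ℝ),
      c * (G 0 0 * G 1 1 - G 0 1 * G 1 0) + τ ^ 2 * H ≤ frob2 (G - τ • (a₁ - a₀)))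
    (hθ : θ ∈ Set.Icc (0 : ℝ) 1)
    (hM : M = frob2 (F - ((1 - θ) • a₀ + θ • a₁)) + θ * (1 - θ) * H)
    (hmin : ∀ t ∈ Set.Icc (0 : ℝ) 1,
      M ≤ frob2 (F - ((1 - t) • a₀ + t • a₁)) + t * (1 - t) * H)
    (G : Matrix (Fin 2) (Fin 2) ℝ) :
    M + 2 * (∑ i, ∑ j, (F - ((1 - θ) • a₀ + θ • a₁)) i j * G i j)
      + c * (G 0 0 * G 1 1 - G 0 1 * G 1 0)
      ≤ min (frob2 (F + G - a₀)) (frob2 (F + G - a₁)) := by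
  obtain ⟨d, hd⟩ : ∃ d, d = F - ((1 - θ) • a₀ + θ • a₁) := ⟨_, rfl⟩
  obtain ⟨a, ha⟩ : ∃ a, a = a₁ - a₀ := ⟨_, rfl⟩
  rw [← hd] at hM ⊢
  rw [← ha] at hc
  have gen : ∀ χ : ℝ, 0 ≤ χ → χ ≤ 1 →
      0 ≤ (χ - θ) * (-2 * (∑ i, ∑ j, d i j * a i j) + (1 - 2 * θ) * H) := by
    intro χ h0 h1
    apply first_order (e := (χ - θ) ^ 2 * (frob2 a - H))
    intro s hs0 hs1
    have h := hmin (θ + s * (χ - θ)) ⟨by nlinarith [hθ.1, hθ.2], by nlinarith [hθ.1, hθ.2]⟩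
    have e : F - ((1 - (θ + s * (χ - θ))) • a₀ + (θ + s * (χ - θ)) • a₁)
        = d - (s * (χ - θ)) • a := by
      rw [hd, ha]
      ext i j
      simp only [Matrix.sub_apply, Matrix.add_apply, Matrix.smul_apply, smul_eq_mul]
      ring
    rw [e, hM, frob2_expand, frob2_expand] at h
    rw [frob2_expand]
    simp only [Fin.sum_univ_two]
    simp only [Matrix.sub_apply, Matrix.smul_apply, smul_eq_mul] at h
    nlinarith [h]
  have main : ∀ χ : ℝ, 0 ≤ χ → χ ≤ 1 → χ ^ 2 = χ →
      M + 2 * (∑ i, ∑ j, d i j * G i j) + c * (G 0 0 * G 1 1 - G 0 1 * G 1 0)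
      ≤ frob2 (d + (G - (χ - θ) • a)) := by
    intro χ h0 h1 h2
    have k1 := gen χ h0 h1
    have k2 := hc G (χ - θ)
    rw [frob2_expand] at k2 hM ⊢
    rw [hM]
    simp only [Fin.sum_univ_two] at k1 ⊢
    simp only [Matrix.sub_apply, Matrix.add_apply, Matrix.smul_apply, smul_eq_mul] at k2 ⊢
    have k3 : (χ - θ) ^ 2 * H = θ * (1 - θ) * H + (χ - θ) * ((1 - 2 * θ) * H) := by
      linear_combination H * h2
    rw [k3] at k2
    nlinarith [k1, k2]
  apply le_min
  · have := main 0 le_rfl zero_le_one (by norm_num)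
    have e : F + G - a₀ = d + (G - ((0 : ℝ) - θ) • a) := by
      rw [hd, ha]
      ext i j
      simp only [Matrix.sub_apply, Matrix.add_apply, Matrix.smul_apply, smul_eq_mul]
      ring
    rw [e]
    exact this
  · have := main 1 zero_le_one le_rfl (by norm_num)
    have e : F + G - a₁ = d + (G - ((1 : ℝ) - θ) • a) := by
      rw [hd, ha]
      ext i j
      simp only [Matrix.sub_apply, Matrix.add_apply, Matrix.smul_apply, smul_eq_mul]
      ring
    rw [e]
    exact this

lemma integral_fderiv_zero {f : (Fin 2 → ℝ) → ℝ} (hf : ContDiff ℝ (⊤ : ℕ∞) f)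
    (hc : HasCompactSupport f) (e : Fin 2 → ℝ) : ∫ x, fderiv ℝ f x e = 0 := by
  have hcd : Continuous (fun x => fderiv ℝ f x e) :=
    (hf.continuous_fderiv (by simp)).clm_apply continuous_const
  have h := integral_mul_fderiv_eq_neg_fderiv_mul_of_integrable (μ := (volume : Measure (Fin 2 → ℝ)))
    (f := fun _ => (1:ℝ)) (g := f) (v := e) (by simp) 
    (by simpa using hcd.integrable_of_hasCompactSupport (hc.fderiv_apply ℝ e)) 
    (by simpa using hf.continuous.integrable_of_hasCompactSupport hc)
    (fun x _ => differentiableAt_const _) (fun x _ => hf.differentiable (by simp) x)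
  simpa using h

lemma integral_det_zero {f g : (Fin 2 → ℝ) → ℝ} (hf : ContDiff ℝ (⊤ : ℕ∞) f)
    (hcf : HasCompactSupport f) (hg : ContDiff ℝ (⊤ : ℕ∞) g) (e₁ e₂ : Fin 2 → ℝ) :
    ∫ x, fderiv ℝ f x e₁ * fderiv ℝ g x e₂ = ∫ x, fderiv ℝ f x e₂ * fderiv ℝ g x e₁ := by
  have hdf : ∀ e, Continuous (fun x => fderiv ℝ f x e) := fun e =>
    (hf.continuous_fderiv (by simp)).clm_apply continuous_const
  have hdg : ∀ e, ContDiff ℝ (⊤ : ℕ∞) (fun x => fderiv ℝ g x e) := fun e =>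
    (hg.fderiv_right (m := (⊤ : ℕ∞)) (by simp)).clm_apply contDiff_const
  have hddg : ∀ e e', Continuous (fun x => fderiv ℝ (fun x => fderiv ℝ g x e) x e') := fun e e' =>
    ((hdg e).continuous_fderiv (by simp)).clm_apply continuous_const
  have hibp : ∀ e e', ∫ x, f x * fderiv ℝ (fun x => fderiv ℝ g x e') x e =
      - ∫ x, fderiv ℝ f x e * fderiv ℝ g x e' := by
    intro e e'
    apply integral_mul_fderiv_eq_neg_fderiv_mul_of_integrable
    · exact ((hdf e).mul (hdg e').continuous).integrable_of_hasCompactSupport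
        (HasCompactSupport.mul_right (hcf.fderiv_apply ℝ e))
    · exact (hf.continuous.mul (hddg e' e)).integrable_of_hasCompactSupport hcf.mul_right
    · exact (hf.continuous.mul (hdg e').continuous).integrable_of_hasCompactSupport hcf.mul_right
    · exact fun x _ => hf.differentiable (by simp) x
    · exact fun x _ => (hdg e').differentiable (by simp) x
  have hsym : ∀ x, fderiv ℝ (fun x => fderiv ℝ g x e₂) x e₁ =
      fderiv ℝ (fun x => fderiv ℝ g x e₁) x e₂ := by
    intro x
    have hd : DifferentiableAt ℝ (fderiv ℝ g) x :=
      (hg.fderiv_right (m := (⊤ : ℕ∞)) (by simp)).differentiable (by simp) x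
    have hs : IsSymmSndFDerivAt ℝ g x :=
      (hg.contDiffAt (x := x)).isSymmSndFDerivAt (by
        simp only [minSmoothness_of_isRCLikeNormedField]
        exact WithTop.coe_le_coe.2 (le_top : (2 : ℕ∞) ≤ ⊤))
    rw [fderiv_clm_apply hd (differentiableAt_const _), fderiv_clm_apply hd (differentiableAt_const _)]
    simpa using hs.eq e₁ e₂
  have h1 := hibp e₁ e₂
  have h2 := hibp e₂ e₁
  simp_rw [hsym] at h1
  linarith

lemma jacobian_comp {v : (Fin 2 → ℝ) → (Fin 2 → ℝ)} (hv : ContDiff ℝ (⊤ : ℕ∞) v)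
    (x : Fin 2 → ℝ) (i j : Fin 2) :
    jacobian v x i j = fderiv ℝ (fun y => v y i) x (Pi.single j 1) := by
  have h := (hv.differentiable (by simp) x)
  have h2 := hasFDerivAt_pi'.1 h.hasFDerivAt i
  rw [h2.fderiv]
  simp [jacobian]

lemma continuous_jacobian {v : (Fin 2 → ℝ) → (Fin 2 → ℝ)} (hv : ContDiff ℝ (⊤ : ℕ∞) v) :
    Continuous (jacobian v) := by
  apply continuous_matrix
  intro i j
  have : Continuous (fun x => fderiv ℝ v x (Pi.single j 1)) :=
    (hv.continuous_fderiv (by simp)).clm_apply continuous_const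
  exact (continuous_apply i).comp this

lemma integrableOn_cont {Ω : Set (Fin 2 → ℝ)} (hb : Bornology.IsBounded Ω)
    {f : (Fin 2 → ℝ) → ℝ} (hf : Continuous f) : IntegrableOn f Ω :=
  (hf.continuousOn.integrableOn_compact hb.isCompact_closure).mono_set subset_closure

lemma energy_lower {Ω : Set (Fin 2 → ℝ)} (hΩ : IsOpen Ω) (hb : Bornology.IsBounded Ω)
    (F a₀ a₁ : Matrix (Fin 2) (Fin 2) ℝ) {c M : ℝ} (D : Matrix (Fin 2) (Fin 2) ℝ)
    (hlow : ∀ G : Matrix (Fin 2) (Fin 2) ℝ, M + 2 * (∑ i, ∑ j, D i j * G i j)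
      + c * (G 0 0 * G 1 1 - G 0 1 * G 1 0)
      ≤ min (frob2 (F + G - a₀)) (frob2 (F + G - a₁)))
    {v : (Fin 2 → ℝ) → (Fin 2 → ℝ)} (hv : ContDiff ℝ (⊤ : ℕ∞) v) (hvc : HasCompactSupport v)
    (hvs : tsupport v ⊆ Ω) :
    (volume Ω).toReal * M ≤ ∫ x in Ω,
      min (frob2 (F + jacobian v x * !![0, -1; 1, 0] - a₀))
        (frob2 (F + jacobian v x * !![0, -1; 1, 0] - a₁)) := by
  have hvi : ∀ i, ContDiff ℝ (⊤ : ℕ∞) (fun y => v y i) := fun i => contDiff_pi.1 hv i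
  have hvci : ∀ i, HasCompactSupport (fun y => v y i) := fun i =>
    hvc.comp_left (g := fun z : Fin 2 → ℝ => z i) rfl
  have hjc := continuous_jacobian hv
  have hjci : ∀ i j, Continuous (fun x => jacobian v x i j) := fun i j => hjc.matrix_elem i j
  have hout : ∀ x, x ∉ Ω → jacobian v x = 0 := by
    intro x hx
    have : fderiv ℝ v x = 0 := by
      by_contra h
      exact hx (hvs (support_fderiv_subset ℝ h))
    ext i j
    simp [jacobian, this]
  have hlin : ∀ i j, ∫ x in Ω, jacobian v x i j = 0 := by
    intro i j
    rw [setIntegral_eq_integral_of_forall_compl_eq_zero (fun x hx => by rw [hout x hx]; rfl)]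
    simp_rw [jacobian_comp hv]
    exact integral_fderiv_zero (hvi i) (hvci i) _
  have hdet : ∫ x in Ω, jacobian v x 0 0 * jacobian v x 1 1 =
      ∫ x in Ω, jacobian v x 0 1 * jacobian v x 1 0 := by
    rw [setIntegral_eq_integral_of_forall_compl_eq_zero (fun x hx => by rw [hout x hx]; simp),
      setIntegral_eq_integral_of_forall_compl_eq_zero (fun x hx => by rw [hout x hx]; simp)]
    simp_rw [jacobian_comp hv]
    exact integral_det_zero (hvi 0) (hvci 0) (hvi 1) _ _
  have hGc : Continuous (fun x => jacobian v x * !![0, -1; 1, 0]) :=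
    hjc.matrix_mul continuous_const
  have hei : IntegrableOn (fun x => min (frob2 (F + jacobian v x * !![0, -1; 1, 0] - a₀))
        (frob2 (F + jacobian v x * !![0, -1; 1, 0] - a₁))) Ω := by
    apply integrableOn_cont hb
    apply Continuous.min
    · exact continuous_frob2.comp ((continuous_const.add hGc).sub continuous_const)
    · exact continuous_frob2.comp ((continuous_const.add hGc).sub continuous_const)
  have hpt : ∀ x, M + (2 * D 0 0) * jacobian v x 0 1 + (-(2 * D 0 1)) * jacobian v x 0 0
      + (2 * D 1 0) * jacobian v x 1 1 + (-(2 * D 1 1)) * jacobian v x 1 0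
      + c * (jacobian v x 0 0 * jacobian v x 1 1)
      + (-c) * (jacobian v x 0 1 * jacobian v x 1 0)
      ≤ min (frob2 (F + jacobian v x * !![0, -1; 1, 0] - a₀))
        (frob2 (F + jacobian v x * !![0, -1; 1, 0] - a₁)) := by
    intro x
    refine le_trans (le_of_eq ?_) (hlow _)
    simp only [Fin.sum_univ_two, Matrix.mul_apply]
    simp
    ring
  have hI : ∀ i j (r : ℝ), IntegrableOn (fun x => r * jacobian v x i j) Ω := fun i j r =>
    integrableOn_cont hb (continuous_const.mul (hjci i j))
  have hI2 : ∀ i j k l (r : ℝ), IntegrableOn (fun x => r * (jacobian v x i j * jacobian v x k l)) Ω :=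
    fun i j k l r => integrableOn_cont hb (continuous_const.mul ((hjci i j).mul (hjci k l)))
  have hI0 : IntegrableOn (fun _ : Fin 2 → ℝ => M) Ω := integrableOn_cont hb continuous_const
  have i1 := hI0.add (hI 0 1 (2 * D 0 0))
  have i2 := i1.add (hI 0 0 (-(2 * D 0 1)))
  have i3 := i2.add (hI 1 1 (2 * D 1 0))
  have i4 := i3.add (hI 1 0 (-(2 * D 1 1)))
  have i5 := i4.add (hI2 0 0 1 1 c)
  have i6 := i5.add (hI2 0 1 1 0 (-c))
  refine le_trans (le_of_eq ?_) (integral_mono i6 hei hpt)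
  rw [integral_add' i5 (hI2 0 1 1 0 (-c)), integral_add' i4 (hI2 0 0 1 1 c),
    integral_add' i3 (hI 1 0 (-(2 * D 1 1))), integral_add' i2 (hI 1 1 (2 * D 1 0)),
    integral_add' i1 (hI 0 0 (-(2 * D 0 1))), integral_add' hI0 (hI 0 1 (2 * D 0 0))]
  simp only [integral_const_mul, hlin, hdet, setIntegral_const, Measure.real, smul_eq_mul]
  ring

lemma jacobian_smul {φ : (Fin 2 → ℝ) → ℝ} (hφ : ContDiff ℝ (⊤ : ℕ∞) φ) (w x : Fin 2 → ℝ)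
    (i j : Fin 2) :
    jacobian (fun y => φ y • w) x i j = w i * fderiv ℝ φ x (Pi.single j 1) := by
  have h := ((hφ.differentiable (by simp) x).hasFDerivAt.smul_const w).fderiv
  simp only [jacobian, Matrix.of_apply, h]
  simp [mul_comm]

lemma exists_min_H (a : Matrix (Fin 2) (Fin 2) ℝ) :
    ∃ H : ℝ, IsLeast {h : ℝ | ∃ ξ : Fin 2 → ℝ, (∑ i, ξ i ^ 2) = 1 ∧
        h = ∑ i, (a.mulVec ξ i) ^ 2} H := by
  have hcomp : IsCompact {ξ : Fin 2 → ℝ | (∑ i, ξ i ^ 2) = 1} := by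
    apply Metric.isCompact_of_isClosed_isBounded
    · exact isClosed_eq (by fun_prop) continuous_const
    · refine (Metric.isBounded_closedBall (x := (0 : Fin 2 → ℝ)) (r := 1)).subset ?_
      intro ξ hξ
      have hξ' : (∑ i, ξ i ^ 2) = 1 := hξ
      rw [mem_closedBall_zero_iff, pi_norm_le_iff_of_nonneg zero_le_one]
      intro i
      rw [Real.norm_eq_abs, ← sq_le_one_iff_abs_le_one, ← hξ']
      exact Finset.single_le_sum (f := fun i => ξ i ^ 2) (fun i _ => sq_nonneg _) (Finset.mem_univ i)
  have hne : {ξ : Fin 2 → ℝ | (∑ i, ξ i ^ 2) = 1}.Nonempty := ⟨![1, 0], by simp⟩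
  have hcont : Continuous (fun ξ : Fin 2 → ℝ => ∑ i, (a.mulVec ξ i) ^ 2) := by
    simp only [Matrix.mulVec, dotProduct]
    fun_prop
  obtain ⟨ξ, hξ, hmin⟩ := hcomp.exists_isMinOn hne hcont.continuousOn
  refine ⟨_, ⟨ξ, hξ, rfl⟩, ?_⟩
  rintro h ⟨ξ', hξ', rfl⟩
  exact hmin hξ'

lemma exists_min_M (F a₀ a₁ : Matrix (Fin 2) (Fin 2) ℝ) (H : ℝ) :
    ∃ M : ℝ, IsLeast {m : ℝ | ∃ θ ∈ Set.Icc (0 : ℝ) 1,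
        m = frob2 (F - ((1 - θ) • a₀ + θ • a₁)) + θ * (1 - θ) * H} M := by
  have hcont : Continuous (fun θ : ℝ =>
      frob2 (F - ((1 - θ) • a₀ + θ • a₁)) + θ * (1 - θ) * H) := by
    have := continuous_frob2
    fun_prop
  obtain ⟨θ, hθ, hmin⟩ := (isCompact_Icc (a := (0:ℝ)) (b := 1)).exists_isMinOn
    ⟨0, by simp⟩ hcont.continuousOn
  refine ⟨_, ⟨θ, hθ, rfl⟩, ?_⟩
  rintro h ⟨θ', hθ', rfl⟩
  exact hmin hθ'

/-- Relaxation formula for the divergence-free two-well energy in two dimensions,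
written via the potential `Dv · J`. -/
theorem statement2
    (Ω : Set (Fin 2 → ℝ)) (hΩopen : IsOpen Ω) (hΩne : Ω.Nonempty)
    (hΩbdd : Bornology.IsBounded Ω)
    (J : Matrix (Fin 2) (Fin 2) ℝ) (hJ : J = !![0, -1; 1, 0])
    (F a₀ a₁ : Matrix (Fin 2) (Fin 2) ℝ) (hwells : a₀ ≠ a₁) :
    ∃ H M : ℝ,
      -- `H = min_{ξ ∈ S¹} ‖aξ‖²`, attained
      IsLeast {h : ℝ | ∃ ξ : Fin 2 → ℝ, (∑ i, ξ i ^ 2) = 1 ∧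
        h = ∑ i, ((a₁ - a₀).mulVec ξ i) ^ 2} H ∧
      -- `M = min_{θ ∈ [0,1]} (‖F - a_θ‖² + θ(1-θ) H)`, attained
      IsLeast {m : ℝ | ∃ θ ∈ Set.Icc (0 : ℝ) 1,
        m = frob2 (F - ((1 - θ) • a₀ + θ • a₁)) + θ * (1 - θ) * H} M ∧
      -- the infimum of the elastic energy over divergence-free fields `F + Dv·J`
      sInf {e : ℝ | ∃ v : (Fin 2 → ℝ) → (Fin 2 → ℝ),
          ContDiff ℝ (⊤ : ℕ∞) v ∧ HasCompactSupport v ∧ tsupport v ⊆ Ω ∧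
          e = ∫ x in Ω,
            min (frob2 (F + jacobian v x * J - a₀)) (frob2 (F + jacobian v x * J - a₁))}
        = (volume Ω).toReal * M := by
  subst hJ
  obtain ⟨H, hH⟩ := exists_min_H (a₁ - a₀)
  obtain ⟨M, hM⟩ := exists_min_M F a₀ a₁ H
  refine ⟨H, M, hH, hM, ?_⟩
  obtain ⟨⟨ξ, hξ, hHξ⟩, hHmin⟩ := hH
  obtain ⟨⟨θ, hθ, hMθ⟩, hMmin⟩ := hM
  rw [Fin.sum_univ_two] at hξ
  simp only [Fin.sum_univ_two, Matrix.mulVec, dotProduct] at hHξ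
  obtain ⟨c, hc⟩ := translation (a₁ - a₀) (sub_ne_zero.2 hwells.symm) (ξ 0) (ξ 1) H hξ hHξ (by
    intro s t hst
    have := hHmin ⟨![s, t], by simpa using hst, rfl⟩
    simpa [Matrix.mulVec, dotProduct, Fin.sum_univ_two] using this)
  have hlow := pointwise_lower F a₀ a₁ hc hθ hMθ (fun t ht => hMmin ⟨t, ht, rfl⟩)
  set S := {e : ℝ | ∃ v : (Fin 2 → ℝ) → (Fin 2 → ℝ),
          ContDiff ℝ (⊤ : ℕ∞) v ∧ HasCompactSupport v ∧ tsupport v ⊆ Ω ∧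
          e = ∫ x in Ω,
            min (frob2 (F + jacobian v x * !![0, -1; 1, 0] - a₀))
              (frob2 (F + jacobian v x * !![0, -1; 1, 0] - a₁))} with hS
  have hlb : ∀ e ∈ S, (volume Ω).toReal * M ≤ e := by
    rintro e ⟨v, hv, hvc, hvs, rfl⟩
    exact energy_lower hΩopen hΩbdd F a₀ a₁ _ hlow hv hvc hvs
  have hSne : S.Nonempty := by
    refine ⟨_, 0, contDiff_const, HasCompactSupport.zero, ?_, rfl⟩
    simp [tsupport]
  have hSbdd : BddBelow S := ⟨_, hlb⟩
  apply le_antisymm _ (le_csInf hSne hlb)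
  -- upper bound
  obtain ⟨w, hw⟩ : ∃ w : Fin 2 → ℝ, w = fun i =>
    -(a₁ - a₀) i 0 * ξ 1 + (a₁ - a₀) i 1 * ξ 0 := ⟨_, rfl⟩
  let W : ((Fin 2 → ℝ) →L[ℝ] ℝ) → Matrix (Fin 2) (Fin 2) ℝ := fun p =>
    Matrix.of fun i j => ![w i * p (Pi.single 1 1), -(w i * p (Pi.single 0 1))] j
  have hWc : Continuous W := by
    apply continuous_matrix
    intro i j
    fin_cases j
    · simp only [W, Matrix.of_apply, Fin.zero_eta, Matrix.cons_val_zero]; fun_prop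
    · simp only [W, Matrix.of_apply, Fin.mk_one, Matrix.cons_val_one]; fun_prop
  have hqc : Continuous (fun p => min (frob2 (F + W p - a₀)) (frob2 (F + W p - a₁))) := by
    apply Continuous.min
    · exact continuous_frob2.comp ((continuous_const.add hWc).sub continuous_const)
    · exact continuous_frob2.comp ((continuous_const.add hWc).sub continuous_const)
  let n : (Fin 2 → ℝ) →L[ℝ] ℝ := -(ξ 0 • ContinuousLinearMap.proj 0 + ξ 1 • ContinuousLinearMap.proj 1)
  have hup := step3 hΩopen hΩbdd hqc (I := sInf S) (by
    intro φ hφ hφc hφs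
    apply csInf_le hSbdd
    refine ⟨fun y => φ y • w, hφ.smul contDiff_const, hφc.smul_right, ?_, ?_⟩
    · refine (closure_mono ?_).trans hφs
      intro x hx hx0
      exact hx (by simp [hx0])
    · congr 1
      ext x
      have : jacobian (fun y => φ y • w) x * !![0, -1; 1, 0] = W (fderiv ℝ φ x) := by
        ext i j
        rw [Matrix.mul_apply, Fin.sum_univ_two, jacobian_smul hφ, jacobian_smul hφ]
        fin_cases j <;> simp [W]
      rw [this]) n hθ.1 hθ.2
  refine hup.trans (mul_le_mul_of_nonneg_left ?_ ENNReal.toReal_nonneg)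
  have hn0 : n (Pi.single 0 1) = -ξ 0 := by simp [n]
  have hn1 : n (Pi.single 1 1) = -ξ 1 := by simp [n]
  have hW : ∀ r : ℝ, W (r • n) = r • Matrix.of fun i j => ![-(w i * ξ 1), w i * ξ 0] j := by
    intro r
    ext i j
    fin_cases j
    · simp [W, hn1]; ring
    · simp [W, hn0]; ring
  refine (add_le_add (mul_le_mul_of_nonneg_left (min_le_right _ _) hθ.1)
    (mul_le_mul_of_nonneg_left (min_le_left _ _) (sub_nonneg.2 hθ.2))).trans (le_of_eq ?_)
  obtain ⟨d, hd⟩ : ∃ d, d = F - ((1 - θ) • a₀ + θ • a₁) := ⟨_, rfl⟩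
  obtain ⟨a, ha⟩ : ∃ a, a = a₁ - a₀ := ⟨_, rfl⟩
  obtain ⟨P, hP⟩ : ∃ P : Matrix (Fin 2) (Fin 2) ℝ,
    P = Matrix.of fun i j => (a i 0 * ξ 0 + a i 1 * ξ 1) * ξ j := ⟨_, rfl⟩
  have hD : (Matrix.of fun i j => ![-(w i * ξ 1), w i * ξ 0] j) = a - P := by
    rw [hP, hw, ← ha]
    ext i j
    fin_cases j
    · simp
      linear_combination (a i 0) * hξ
    · simp
      linear_combination (a i 1) * hξ
  have e1 : F + (1 - θ) • (a - P) - a₁ = d - (1 - θ) • P := by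
    rw [hd, ha]
    ext i j
    simp only [Matrix.sub_apply, Matrix.add_apply, Matrix.smul_apply, smul_eq_mul]
    ring
  have e2 : F + (-θ) • (a - P) - a₀ = d + θ • P := by
    rw [hd, ha]
    ext i j
    simp only [Matrix.sub_apply, Matrix.add_apply, Matrix.smul_apply, smul_eq_mul]
    ring
  have hPH : H = frob2 P := by
    rw [hHξ, ← ha, frob2_expand, hP]
    simp only [Matrix.of_apply]
    linear_combination -((a 0 0 * ξ 0 + a 0 1 * ξ 1) ^ 2 + (a 1 0 * ξ 0 + a 1 1 * ξ 1) ^ 2) * hξ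
  rw [hW, hW, hD, e1, e2, hMθ, ← hd, hPH, frob2_expand, frob2_expand, frob2_expand, frob2_expand]
  simp only [Matrix.sub_apply, Matrix.add_apply, Matrix.smul_apply, smul_eq_mul]
  ring
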